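/- arXiv:math/0511400 — 2 statements merged into one kernel-verified Lean document; each statement's English description precedes it below -/
import Mathlib

section
/- Let G be almost cyclic with conjugate generator x, and let N be a nontrivial normal subgroup of G such that the quotient G/N is cyclic. Then G/N is finite (hence finite cyclic). -/
/-!
A nontrivial element of `N` is conjugate to a power `x ^ n` with `n ≠ 0`, and `x ^ n` lies in `N`
by normality, so `x` has finite order in `G ⧸ N`. Conjugacy in the commutative group `G ⧸ N` is
equality, so the powers of the image of `x` already exhaust the quotient.
-/

/-- The conjugate generators that define almost cyclic groups. Exponents are integers, and
conjugacy is expressed by Mathlib's `IsConj`. -/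
def IsConjGenerator {G : Type*} [Group G] (x : G) : Prop :=
  ∀ y : G, ∃ n : ℤ, IsConj y (x ^ n)

namespace IsConjGenerator

variable {G : Type*} [Group G] {x : G}

theorem map {H : Type*} [Group H] (hx : IsConjGenerator x) {f : G →* H}
    (hf : Function.Surjective f) : IsConjGenerator (f x) :=
  hf.forall.2 fun y ↦ (hx y).imp fun n hn ↦ map_zpow f x n ▸ f.map_isConj hn

open scoped IsMulCommutative in
theorem zpowers_eq_top [IsMulCommutative G] (hx : IsConjGenerator x) :
    Subgroup.zpowers x = ⊤ :=
  (Subgroup.eq_top_iff' _).2 fun y ↦ (hx y).imp fun _ hn ↦ (isConj_iff_eq.1 hn).symm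

theorem exists_zpow_mem (hx : IsConjGenerator x) {N : Subgroup G} [N.Normal] (hN : N ≠ ⊥) :
    ∃ n : ℤ, n ≠ 0 ∧ x ^ n ∈ N := by
  obtain ⟨y, hyN, hy⟩ := N.bot_or_exists_ne_one.resolve_left hN
  obtain ⟨n, hconj⟩ := hx y
  refine ⟨n, ?_, ?_⟩
  · rintro rfl
    exact hy (isConj_one_left.1 (zpow_zero x ▸ hconj))
  · obtain ⟨a, ha⟩ := isConj_iff.1 hconj
    exact ha ▸ Subgroup.Normal.conj_mem ‹N.Normal› y hyN a

theorem isOfFinOrder_mk (hx : IsConjGenerator x) {N : Subgroup G} [N.Normal] (hN : N ≠ ⊥) :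
    IsOfFinOrder (x : G ⧸ N) := by
  obtain ⟨n, hn, hxn⟩ := hx.exists_zpow_mem hN
  exact isOfFinOrder_iff_zpow_eq_one.2 ⟨n, hn, (QuotientGroup.eq_one_iff (x ^ n)).2 hxn⟩

end IsConjGenerator

theorem quotient_finite_of_cyclic_quotient_general {G : Type*} [Group G] {x : G}
    (hx : IsConjGenerator x) {N : Subgroup G} [N.Normal] (hN : N ≠ ⊥)
    [IsMulCommutative (G ⧸ N)] : Finite (G ⧸ N) := by
  have hgen : Subgroup.zpowers (x : G ⧸ N) = ⊤ :=
    (hx.map (QuotientGroup.mk'_surjective N)).zpowers_eq_top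
  have hfin : (Subgroup.zpowers (x : G ⧸ N) : Set (G ⧸ N)).Finite :=
    finite_zpowers.2 (hx.isOfFinOrder_mk hN)
  rwa [hgen, Subgroup.coe_top, Set.finite_univ_iff] at hfin

/-- If `G` is almost cyclic with conjugate generator `x` and `N` is a
nontrivial normal subgroup with `G/N` cyclic, then `G/N` is finite. -/
theorem quotient_finite_of_cyclic_quotient {G : Type*} [Group G] (x : G)
    (hx : ∀ y : G, ∃ a : G, ∃ n : ℤ, a * y * a⁻¹ = x ^ n)
    (N : Subgroup G) [N.Normal] (hN : N ≠ ⊥) (hcyc : IsCyclic (G ⧸ N)) :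
    Finite (G ⧸ N) := by
  have hgen : IsConjGenerator x := fun y ↦ (exists_comm.1 (hx y)).imp fun _ ↦ isConj_iff.2
  exact quotient_finite_of_cyclic_quotient_general hgen hN
end

section
/- Let G be a free group on a set X. If G is almost cyclic, then G is cyclic; equivalently, X has at most one element, so G is trivial or infinite cyclic. -/
/-!
Conjugation disappears in an abelian quotient, so a conjugate generator of `G` maps to a generator
of the abelianization of `G`. The abelianization of the free group on `X` is free abelian of rank
`#X`, and a free abelian group that is cyclic has rank at most one.
-/

/-- The group `G` is almost cyclic: there is a conjugate generator `x`, that is, an element such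
that everything in `G` is conjugate to an integer power of `x`. The conjugation is written out as
`a * y * a⁻¹` so that the hypothesis of the main theorem unfolds to this predicate. -/
def IsAlmostCyclic (G : Type*) [Group G] : Prop :=
  ∃ x : G, ∀ y : G, ∃ a : G, ∃ n : ℤ, a * y * a⁻¹ = x ^ n

namespace IsAlmostCyclic

theorem of_surjective {G H : Type*} [Group G] [Group H] (hG : IsAlmostCyclic G) (f : G →* H)
    (hf : Function.Surjective f) : IsAlmostCyclic H := by
  obtain ⟨x, hx⟩ := hG
  refine ⟨f x, hf.forall.mpr fun y => ?_⟩
  obtain ⟨a, n, h⟩ := hx y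
  exact ⟨f a, n, by simpa only [map_mul, map_inv, map_zpow] using congrArg f h⟩

theorem isCyclic {A : Type*} [CommGroup A] (hA : IsAlmostCyclic A) : IsCyclic A := by
  obtain ⟨x, hx⟩ := hA
  refine ⟨x, fun y => ?_⟩
  obtain ⟨a, n, h⟩ := hx y
  exact ⟨n, h.symm.trans (mul_inv_cancel_comm a y)⟩

theorem isCyclic_abelianization {G : Type*} [Group G] (hG : IsAlmostCyclic G) :
    IsCyclic (Abelianization G) :=
  (hG.of_surjective Abelianization.of (QuotientGroup.mk'_surjective _)).isCyclic

end IsAlmostCyclic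

theorem rank_int_le_one_of_isAddCyclic (A : Type*) [AddCommGroup A] [IsAddCyclic A] :
    Module.rank ℤ A ≤ 1 := by
  obtain ⟨x, hx⟩ := exists_zsmul_surjective A
  exact rank_le_one x hx

theorem rank_freeAbelianGroup (X : Type*) :
    Module.rank ℤ (FreeAbelianGroup X) = Cardinal.mk X :=
  (FreeAbelianGroup.basis X).mk_eq_rank''.symm

theorem subsingleton_of_isCyclic_abelianization_freeGroup {X : Type*}
    (h : IsCyclic (Abelianization (FreeGroup X))) : Subsingleton X := by
  have : IsAddCyclic (FreeAbelianGroup X) := isAddCyclic_additive_iff.mpr h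
  rw [← Cardinal.le_one_iff_subsingleton, ← rank_freeAbelianGroup]
  exact rank_int_le_one_of_isAddCyclic (FreeAbelianGroup X)

theorem isCyclic_freeGroup_of_subsingleton (X : Type*) [Subsingleton X] :
    IsCyclic (FreeGroup X) := by
  cases isEmpty_or_nonempty X with
  | inl _ => infer_instance
  | inr _ =>
    let _ : Unique X := uniqueOfSubsingleton (Classical.arbitrary X)
    infer_instance

/-- An almost cyclic free group is cyclic; equivalently the generating
set has at most one element. -/
theorem free_group_almost_cyclic_isCyclic {X : Type*}
    (hG : ∃ x : FreeGroup X, ∀ y : FreeGroup X,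
      ∃ a : FreeGroup X, ∃ n : ℤ, a * y * a⁻¹ = x ^ n) :
    IsCyclic (FreeGroup X) ∧ Subsingleton X := by
  have hAlmostCyclic : IsAlmostCyclic (FreeGroup X) := hG
  have hX : Subsingleton X :=
    subsingleton_of_isCyclic_abelianization_freeGroup hAlmostCyclic.isCyclic_abelianization
  exact ⟨isCyclic_freeGroup_of_subsingleton X, hX⟩
end
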